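/- Fix integers M ≥ 1, t_k ≥ 1, a prime power q, and ε_k ∈ [0,1]. Let H be a random M×s matrix over F_q, Φ a totally random s×t_k matrix over F_q, and D a t_k×t_k random diagonal matrix with i.i.d. diagonal entries equal to 1 with probability 1-ε_k and 0 otherwise, with H, Φ, D mutually independent. Then for 0 ≤ r ≤ M, Pr{rank(HΦD) = r} = Σ_{m=r}^{M} Σ_{n=r}^{t_k} Pr{rank(H)=m} · C(t_k,n)(1-ε_k)^n ε_k^{t_k-n} · ζ_r^{n,m}, where ζ_r^{n,m} is the probability that a totally random n×m matrix over F_q has rank r. -/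

import Mathlib

open scoped Classical

/-- `ζ_r^n = ∏_{i=0}^{r-1} (1 - q^{-n+i})`, `ζ_0^n = 1`. -/
noncomputable def zeta (q : ℝ) (r n : ℕ) : ℝ :=
  ∏ i ∈ Finset.range r, (1 - q ^ ((i : ℤ) - (n : ℤ)))

/-- `ζ_r^{n,m} = ζ_r^n ζ_r^m / (ζ_r^r q^{(n-r)(m-r)})`, the probability that a
totally random `n × m` matrix over `F_q` has rank `r`. -/
noncomputable def zeta2 (q : ℝ) (r n m : ℕ) : ℝ :=
  zeta q r n * zeta q r m / (zeta q r r * q ^ (((n : ℤ) - r) * ((m : ℤ) - r)))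

/-!
The products `A * Φ * B` see `Φ` only through the linear map it induces from the range of `B` to the
range of `A`. This is the image of `Φ` under a surjective additive homomorphism, so it is uniform if
`Φ` is. Hence, given the ranks of `H` and `D`, the rank of `H * Φ * D` is that of a uniform linear
map between spaces of dimensions `rank D` and `rank H`, that is, the dimension of the span of
`n = rank D` independent uniform vectors in a space of dimension `m = rank H`. A further vector lies
in a given `k`-dimensional subspace with probability `q ^ (k - m)`, and the resulting recurrence in
`n` is the one satisfied by `ζ_r^{n,m}`.
-/

section Zeta

variable {q : ℝ} {r n m : ℕ}

theorem zeta_succ_left (q : ℝ) (r n : ℕ) :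
    zeta q (r + 1) n = zeta q r n * (1 - q ^ ((r : ℤ) - n)) :=
  Finset.prod_range_succ _ _

theorem zeta_succ_succ (q : ℝ) (r n : ℕ) :
    zeta q (r + 1) (n + 1) = zeta q r n * (1 - q ^ (-(n : ℤ) - 1)) := by
  simp only [zeta, Finset.prod_range_succ', Nat.cast_add, Nat.cast_one, Nat.cast_zero,
    add_sub_add_right_eq_sub, zero_sub, neg_add']

theorem zeta_self_ne_zero (hq : 1 < q) (r : ℕ) : zeta q r r ≠ 0 :=
  Finset.prod_ne_zero_iff.2 fun i hi =>
    (sub_pos.2 (zpow_lt_one_of_neg₀ hq (by simpa using hi))).ne'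

theorem zeta_eq_zero_of_lt (q : ℝ) (h : n < r) : zeta q r n = 0 :=
  Finset.prod_eq_zero (Finset.mem_range.2 h) (by simp)

theorem zeta2_eq_zero_of_lt_left (q : ℝ) (h : n < r) (m : ℕ) : zeta2 q r n m = 0 := by
  simp [zeta2, zeta_eq_zero_of_lt q h]

theorem zeta2_eq_zero_of_lt_right (q : ℝ) (n : ℕ) (h : m < r) : zeta2 q r n m = 0 := by
  simp [zeta2, zeta_eq_zero_of_lt q h]

theorem zeta2_zero_left (q : ℝ) (n m : ℕ) : zeta2 q 0 n m = ((q ^ m) ^ n)⁻¹ := by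
  simp only [zeta2, zeta, Finset.range_zero, Finset.prod_empty, one_mul, one_div,
    Nat.cast_zero, sub_zero]
  rw [← pow_mul, ← zpow_natCast, Nat.cast_mul, mul_comm]

theorem zeta2_succ_succ (hq : 1 < q) (r n m : ℕ) :
    zeta2 q (r + 1) (n + 1) m =
      zeta2 q (r + 1) n m * q ^ ((r : ℤ) + 1 - m) + zeta2 q r n m * (1 - q ^ ((r : ℤ) - m)) := by
  have hq0 : q ≠ 0 := by positivity
  -- `K` is the common factor of the three terms: the left-hand side is `K (1 - q^{-n-1})`, and the
  -- terms on the right split this as `1 - q^{r-n}` plus `q^{r-n} - q^{-n-1}`.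
  set K := zeta q r n * zeta q r m * (1 - q ^ ((r : ℤ) - m)) /
    (zeta q (r + 1) (r + 1) * q ^ (((n : ℤ) - r) * (m - (r + 1)))) with hK
  have hleft : zeta2 q (r + 1) (n + 1) m = K * (1 - q ^ (-(n : ℤ) - 1)) := by
    rw [zeta2, zeta_succ_succ q r n, zeta_succ_left q r m, hK]
    push_cast
    ring_nf
  have hstay : zeta2 q (r + 1) n m * q ^ ((r : ℤ) + 1 - m) = K * (1 - q ^ ((r : ℤ) - n)) := by
    have hexp : q ^ (((n : ℤ) - r) * (m - (r + 1))) =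
        q ^ (((n : ℤ) - (r + 1)) * (m - (r + 1))) * (q ^ ((r : ℤ) + 1 - m))⁻¹ := by
      rw [← zpow_neg, ← zpow_add₀ hq0]
      ring_nf
    rw [zeta2, zeta_succ_left q r n, zeta_succ_left q r m, hK, hexp]
    push_cast
    field_simp
  have hgrow : zeta2 q r n m * (1 - q ^ ((r : ℤ) - m)) =
      K * (q ^ ((r : ℤ) - n) - q ^ (-(n : ℤ) - 1)) := by
    have hr := zeta_self_ne_zero hq (r + 1)
    rw [zeta_succ_succ, mul_ne_zero_iff] at hr
    have hexp : q ^ (((n : ℤ) - r) * (m - (r + 1))) =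
        q ^ (((n : ℤ) - r) * (m - r)) * q ^ ((r : ℤ) - n) := by
      rw [← zpow_add₀ hq0]
      ring_nf
    have hfactor : q ^ ((r : ℤ) - n) - q ^ (-(n : ℤ) - 1) =
        q ^ ((r : ℤ) - n) * (1 - q ^ (-(r : ℤ) - 1)) := by
      rw [mul_sub, mul_one, ← zpow_add₀ hq0]
      ring_nf
    rw [zeta2, hK, zeta_succ_succ, hexp, hfactor]
    have hr₁ := hr.1
    have hr₂ := hr.2
    field_simp
  rw [hleft, hstay, hgrow]
  ring

end Zeta

section Counting

open Finset Module Submodule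

variable {F V : Type*} [Field F] [AddCommGroup V] [Module F V] [Fintype V]

theorem card_filter_finrank_span_range_eq_zero (n : ℕ) :
    #{v : Fin n → V | finrank F (span F (Set.range v)) = 0} = 1 := by
  have hzero (v : Fin n → V) : finrank F (span F (Set.range v)) = 0 ↔ v = 0 := by
    rw [finrank_eq_zero, span_eq_bot, Set.forall_mem_range, funext_iff]
    rfl
  simp [hzero, filter_eq']

variable [Fintype F]

theorem card_filter_finrank_sup_span_singleton (U : Submodule F V) (r : ℕ) :
    (#{x : V | finrank F ↥(U ⊔ span F {x}) = r + 1} : ℝ) =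
      (if finrank F U = r + 1 then (Fintype.card F : ℝ) ^ (r + 1) else 0) +
        if finrank F U = r then (Fintype.card V : ℝ) - Fintype.card F ^ r else 0 := by
  have hmem : (#{x : V | x ∈ U} : ℝ) = Fintype.card F ^ finrank F U := by
    rw [← Nat.cast_pow, ← card_eq_pow_finrank (K := F) (V := U), Fintype.card_subtype]
  have hnotMem : (#{x : V | x ∉ U} : ℝ) = Fintype.card V - Fintype.card F ^ finrank F U := by
    rw [← hmem, eq_sub_iff_add_eq', ← Nat.cast_add, card_filter_add_card_filter_not, card_univ]
  have hfinrank (x : V) :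
      finrank F ↥(U ⊔ span F {x}) = if x ∈ U then finrank F U else finrank F U + 1 := by
    split_ifs with hx
    · rw [sup_eq_left.2 ((span_singleton_le_iff_mem x U).2 hx)]
    · exact finrank_sup_span_singleton hx
  rcases eq_or_ne (finrank F U) (r + 1) with h | h
  · simp [hfinrank, h, hmem]
  rcases eq_or_ne (finrank F U) r with h' | h'
  · simp [hfinrank, h', hnotMem]
  · simp [hfinrank, h, h', apply_ite (· = r + 1)]

theorem card_filter_finrank_span_range_succ (n r : ℕ) :
    (#{v : Fin (n + 1) → V | finrank F (span F (Set.range v)) = r + 1} : ℝ) =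
      #{v : Fin n → V | finrank F (span F (Set.range v)) = r + 1} * Fintype.card F ^ (r + 1) +
        #{v : Fin n → V | finrank F (span F (Set.range v)) = r} *
          (Fintype.card V - Fintype.card F ^ r) := by
  have hspan (x : V) (v : Fin n → V) :
      span F (Set.range (Fin.cons x v : Fin (n + 1) → V)) =
        span F (Set.range v) ⊔ span F {x} := by
    rw [Fin.range_cons, span_insert, sup_comm]
  have hcons : #{v : Fin (n + 1) → V | finrank F (span F (Set.range v)) = r + 1} =
      ∑ v : Fin n → V, #{x : V | finrank F ↥(span F (Set.range v) ⊔ span F {x}) = r + 1} := by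
    simp only [card_filter]
    rw [← (Fin.consEquiv fun _ => V).sum_comp, Fintype.sum_prod_type_right]
    exact sum_congr rfl fun v _ => sum_congr rfl fun x _ => by rw [← hspan]; rfl
  rw [hcons, Nat.cast_sum]
  simp only [card_filter_finrank_sup_span_singleton, sum_add_distrib, ← sum_filter, sum_const,
    nsmul_eq_mul]

theorem card_filter_finrank_span_range (n r : ℕ) :
    (#{v : Fin n → V | finrank F (span F (Set.range v)) = r} : ℝ) =
      Fintype.card V ^ n * zeta2 (Fintype.card F) r n (finrank F V) := by
  have hq : (1 : ℝ) < Fintype.card F := by exact_mod_cast Fintype.one_lt_card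
  have hq0 : (Fintype.card F : ℝ) ≠ 0 := (zero_lt_one.trans hq).ne'
  have hV : (Fintype.card V : ℝ) = Fintype.card F ^ finrank F V := by
    exact_mod_cast card_eq_pow_finrank
  have hV0 : (Fintype.card V : ℝ) ≠ 0 := by simp
  have hpow (k : ℕ) : (Fintype.card F : ℝ) ^ k =
      Fintype.card V * (Fintype.card F : ℝ) ^ ((k : ℤ) - finrank F V) := by
    rw [zpow_sub₀ hq0, zpow_natCast, zpow_natCast, ← hV, mul_div_cancel₀ _ hV0]
  have hzero (n : ℕ) : (#{v : Fin n → V | finrank F (span F (Set.range v)) = 0} : ℝ) =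
      Fintype.card V ^ n * zeta2 (Fintype.card F) 0 n (finrank F V) := by
    rw [card_filter_finrank_span_range_eq_zero, zeta2_zero_left, ← hV, Nat.cast_one,
      mul_inv_cancel₀ (pow_ne_zero n hV0)]
  induction n generalizing r with
  | zero =>
    rcases r with _ | r
    · exact hzero 0
    · have hspan (v : Fin 0 → V) : finrank F (span F (Set.range v)) = 0 := by
        rw [Set.range_eq_empty, span_empty, finrank_bot]
      simp only [hspan]
      simp [zeta2_eq_zero_of_lt_left]
  | succ n ih =>
    rcases r with _ | r
    · exact hzero (n + 1)
    · rw [card_filter_finrank_span_range_succ, ih, ih, zeta2_succ_succ hq, hpow, hpow]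
      push_cast
      ring

end Counting

section Compression

open Module

variable {F V W X Y : Type*} [Field F] [AddCommGroup V] [Module F V] [AddCommGroup W] [Module F W]
  [AddCommGroup X] [Module F X] [AddCommGroup Y] [Module F Y]

/-- What is left of `f : X →ₗ[F] V` in the composite `L ∘ₗ f ∘ₗ K`: restrict it to the range of `K`
and follow it by `L`, onto the range of `L`. -/
def compression (L : V →ₗ[F] W) (K : Y →ₗ[F] X) :
    (X →ₗ[F] V) →ₗ[F] (LinearMap.range K →ₗ[F] LinearMap.range L) where
  toFun f := L.rangeRestrict ∘ₗ f ∘ₗ (LinearMap.range K).subtype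
  map_add' f g := by rw [LinearMap.add_comp, LinearMap.comp_add]
  map_smul' c f := by rw [LinearMap.smul_comp, LinearMap.comp_smul, RingHom.id_apply]

theorem compression_surjective (L : V →ₗ[F] W) (K : Y →ₗ[F] X) :
    Function.Surjective (compression L K) := fun g => by
  obtain ⟨h, hh⟩ := projective_lifting_property L.rangeRestrict g L.surjective_rangeRestrict
  obtain ⟨f, hf⟩ := h.exists_extend
  exact ⟨f, (congrArg (L.rangeRestrict ∘ₗ ·) hf).trans hh⟩

theorem finrank_range_compression (L : V →ₗ[F] W) (K : Y →ₗ[F] X) (f : X →ₗ[F] V) :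
    finrank F (LinearMap.range (compression L K f)) =
      finrank F (LinearMap.range (L ∘ₗ f ∘ₗ K)) := by
  have hfactor : L ∘ₗ f ∘ₗ K =
      ((LinearMap.range L).subtype ∘ₗ compression L K f) ∘ₗ K.rangeRestrict := rfl
  rw [hfactor, LinearMap.range_comp_of_range_eq_top _ K.range_rangeRestrict, LinearMap.range_comp,
    Submodule.finrank_map_subtype_eq]

end Compression

section Uniform

open Finset Module

theorem map_uniformOfFintype_of_surjective {G H : Type*} [AddGroup G] [AddGroup H] [Fintype G]
    [Fintype H] (f : G →+ H) (hf : Function.Surjective f) :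
    (PMF.uniformOfFintype G).map f = PMF.uniformOfFintype H := by
  ext y
  have hcard : (Fintype.card G : ENNReal) = #{x | f x = y} * Fintype.card H := by
    norm_cast
    calc Fintype.card G
      _ = ∑ z : H, #{x | f x = z} := card_eq_sum_card_fiberwise fun _ _ => mem_univ _
      _ = ∑ _z : H, #{x | f x = y} :=
        sum_congr rfl fun z _ => AddMonoidHom.card_fiber_eq_of_mem_range f (hf z) (hf y)
      _ = #{x | f x = y} * Fintype.card H := by rw [sum_const, smul_eq_mul, mul_comm, card_univ]
  have hfiber : (#{x | f x = y} : ENNReal) ≠ 0 :=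
    left_ne_zero_of_mul (hcard ▸ Nat.cast_ne_zero.2 Fintype.card_ne_zero)
  simp only [PMF.map_apply, PMF.uniformOfFintype_apply, tsum_fintype, ← sum_filter,
    eq_comm (a := y), sum_const, nsmul_eq_mul]
  rw [hcard, ENNReal.mul_inv (.inl hfiber) (.inl (ENNReal.natCast_ne_top _)), ← mul_assoc,
    ENNReal.mul_inv_cancel hfiber (ENNReal.natCast_ne_top _), one_mul]

theorem toOuterMeasure_uniformOfFintype_ofPred {α : Type*} [Fintype α] [Nonempty α]
    (p : α → Prop) [DecidablePred p] :
    (PMF.uniformOfFintype α).toOuterMeasure {a | p a} =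
      ENNReal.ofReal ((#{a | p a} : ℝ) / Fintype.card α) := by
  rw [PMF.toOuterMeasure_uniformOfFintype_apply,
    ENNReal.ofReal_div_of_pos (Nat.cast_pos.2 Fintype.card_pos),
    ENNReal.ofReal_natCast, ENNReal.ofReal_natCast, ← Fintype.card_subtype]
  rfl

theorem toOuterMeasure_uniformOfFintype_finrank_range {F X Y : Type*} [Field F] [Fintype F]
    [AddCommGroup X] [Module F X] [Module.Finite F X] [AddCommGroup Y] [Module F Y]
    [Module.Finite F Y] [Fintype (X →ₗ[F] Y)] (r : ℕ) :
    (PMF.uniformOfFintype (X →ₗ[F] Y)).toOuterMeasure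
        {f | finrank F (LinearMap.range f) = r} =
      ENNReal.ofReal (zeta2 (Fintype.card F) r (finrank F X) (finrank F Y)) := by
  have : Finite Y := Module.finite_of_finite F
  have := Fintype.ofFinite Y
  let e := (finBasis F X).constr F (M' := Y)
  rw [← map_uniformOfFintype_of_surjective e.toLinearMap.toAddMonoidHom e.surjective,
    PMF.toOuterMeasure_map_apply]
  have hrange (v : Fin (finrank F X) → Y) :
      finrank F (LinearMap.range (e v)) = finrank F (Submodule.span F (Set.range v)) := by
    rw [Basis.constr_range]
  have hpreimage : e.toLinearMap.toAddMonoidHom ⁻¹' {f | finrank F (LinearMap.range f) = r} =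
      {v | finrank F (Submodule.span F (Set.range v)) = r} :=
    Set.ext fun v => iff_of_eq (congrArg (· = r) (hrange v))
  rw [hpreimage, toOuterMeasure_uniformOfFintype_ofPred, card_filter_finrank_span_range,
    Fintype.card_fun, Fintype.card_fin, Nat.cast_pow, mul_div_cancel_left₀ _ (by simp)]

theorem toOuterMeasure_uniformOfFintype_finrank_range_comp_comp {F V W X Y : Type*} [Field F]
    [Fintype F] [AddCommGroup V] [Module F V] [Module.Finite F V] [AddCommGroup W] [Module F W]
    [AddCommGroup X] [Module F X] [Module.Finite F X] [AddCommGroup Y] [Module F Y]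
    [Fintype (X →ₗ[F] V)] (L : V →ₗ[F] W) (K : Y →ₗ[F] X) (r : ℕ) :
    (PMF.uniformOfFintype (X →ₗ[F] V)).toOuterMeasure
        {f | finrank F (LinearMap.range (L ∘ₗ f ∘ₗ K)) = r} =
      ENNReal.ofReal (zeta2 (Fintype.card F) r (finrank F (LinearMap.range K))
        (finrank F (LinearMap.range L))) := by
  have : Finite (LinearMap.range K →ₗ[F] LinearMap.range L) := Module.finite_of_finite F
  have := Fintype.ofFinite (LinearMap.range K →ₗ[F] LinearMap.range L)
  rw [← toOuterMeasure_uniformOfFintype_finrank_range, ← map_uniformOfFintype_of_surjective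
    (compression L K).toAddMonoidHom (compression_surjective L K), PMF.toOuterMeasure_map_apply]
  simp only [← finrank_range_compression]
  rfl

theorem toOuterMeasure_uniformOfFintype_rank_mul_mul {F l m n o : Type*} [Field F] [Fintype F]
    [Fintype m] [DecidableEq m] [Fintype n] [DecidableEq n] [Fintype o] (A : Matrix l m F)
    (B : Matrix n o F) (r : ℕ) :
    (PMF.uniformOfFintype (Matrix m n F)).toOuterMeasure {Φ | (A * Φ * B).rank = r} =
      ENNReal.ofReal (zeta2 (Fintype.card F) r B.rank A.rank) := by
  have := Fintype.ofEquiv _ (Matrix.toLin' (R := F) (m := m) (n := n)).toEquiv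
  have hmap : (PMF.uniformOfFintype (Matrix m n F)).map Matrix.toLin' = PMF.uniformOfFintype _ :=
    map_uniformOfFintype_of_surjective (G := Matrix m n F)
      (Matrix.toLin' (R := F) (m := m) (n := n)).toLinearMap.toAddMonoidHom Matrix.toLin'.surjective
  have hrank (Φ : Matrix m n F) : (A * Φ * B).rank =
      finrank F (LinearMap.range (A.mulVecLin ∘ₗ Φ.toLin' ∘ₗ B.mulVecLin)) := by
    rw [Matrix.rank, Matrix.mulVecLin_mul, Matrix.mulVecLin_mul, LinearMap.comp_assoc]
    rfl
  rw [Matrix.rank, Matrix.rank, ← toOuterMeasure_uniformOfFintype_finrank_range_comp_comp,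
    ← hmap, PMF.toOuterMeasure_map_apply]
  simp only [hrank]
  rfl

end Uniform

section Erasure

open Finset

variable {ι : Type*} [Fintype ι]

theorem card_filter_card_filter_eq (n : ℕ) :
    #{d : ι → Bool | #{i | d i} = n} = (Fintype.card ι).choose n := by
  rw [← card_univ, ← card_powersetCard]
  refine card_nbij' (fun d => ({i | d i} : Finset ι)) (fun S i => decide (i ∈ S)) ?_ ?_ ?_ ?_ <;>
    simp +contextual [Set.MapsTo, Set.LeftInvOn, mem_powersetCard]

theorem toOuterMeasure_card_filter_eq (p : PMF (ι → Bool)) {a b : ENNReal}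
    (hp : ∀ d, p d = ∏ i, if d i then a else b) (n : ℕ) :
    p.toOuterMeasure {d | #{i | d i} = n} =
      (Fintype.card ι).choose n * (a ^ n * b ^ (Fintype.card ι - n)) := by
  have hweight (d : ι → Bool) (hd : d ∈ ({d | #{i | d i} = n} : Finset (ι → Bool))) :
      p d = a ^ n * b ^ (Fintype.card ι - n) := by
    rw [← (mem_filter.1 hd).2, hp, prod_ite, prod_const, prod_const, filter_not,
      ← compl_eq_univ_sdiff, card_compl]
  rw [← card_filter_card_filter_eq, ← nsmul_eq_mul, ← sum_const, ← sum_congr rfl hweight,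
    ← PMF.toOuterMeasure_apply_finset, coe_filter_univ]

end Erasure

theorem toOuterMeasure_rank_diagonal {F : Type*} [Field F] {ι : Type*} [Fintype ι] [DecidableEq ι]
    {ε : ℝ}
    (hε : ε ∈ Set.Icc (0 : ℝ) 1) (p : PMF (ι → Bool))
    (hp : ∀ d, p d = ∏ i, if d i then ENNReal.ofReal (1 - ε) else ENNReal.ofReal ε) (n : ℕ) :
    (p.map fun d => Matrix.diagonal fun i => if d i then (1 : F) else 0).toOuterMeasure
        {D | D.rank = n} =
      ENNReal.ofReal ((Fintype.card ι).choose n * (1 - ε) ^ n * ε ^ (Fintype.card ι - n)) := by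
  have hε' : 0 ≤ 1 - ε := sub_nonneg.2 hε.2
  have hrank (d : ι → Bool) :
      (Matrix.diagonal fun i => if d i then (1 : F) else 0).rank = Finset.card {i | d i} := by
    rw [Matrix.rank_diagonal, Fintype.card_subtype]
    simp
  rw [PMF.toOuterMeasure_map_apply, Set.preimage_ofPred_eq]
  simp only [hrank]
  rw [toOuterMeasure_card_filter_eq p hp, mul_assoc, ENNReal.ofReal_mul (Nat.cast_nonneg _),
    ENNReal.ofReal_natCast, ENNReal.ofReal_mul (pow_nonneg hε' n), ENNReal.ofReal_pow hε',
    ENNReal.ofReal_pow hε.1]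

theorem tsum_mul_comp_eq_sum {α β : Type*} (p : PMF α) (g : α → β) (c : β → ENNReal)
    {s : Finset β} (hs : ∀ a, g a ∉ s → c (g a) = 0) :
    ∑' a, p a * c (g a) = ∑ b ∈ s, p.toOuterMeasure {a | g a = b} * c b := by
  simp only [PMF.toOuterMeasure_apply, ← ENNReal.tsum_mul_right]
  rw [← Summable.tsum_finsetSum fun _ _ => ENNReal.summable]
  refine tsum_congr fun a => ?_
  simp only [Set.indicator_apply, Set.mem_ofPred_eq, ite_mul, zero_mul, Finset.sum_ite_eq]
  split_ifs with h
  · rfl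
  · rw [hs a h, mul_zero]

theorem rank_evolution_one_hop_general {F l m n o : Type*} [Field F] [Fintype F] [Fintype l]
    [Fintype m] [DecidableEq m] [Fintype n] [DecidableEq n] [Fintype o] (H : PMF (Matrix l m F))
    (D : PMF (Matrix n o F)) (r : ℕ) :
    (H.bind fun A => (PMF.uniformOfFintype (Matrix m n F)).bind fun Φ =>
        D.map fun B => A * Φ * B).toOuterMeasure {X | X.rank = r} =
      ∑ i ∈ Finset.Icc r (Fintype.card l), ∑ j ∈ Finset.Icc r (Fintype.card n),
        H.toOuterMeasure {A | A.rank = i} * (D.toOuterMeasure {B | B.rank = j} *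
          ENNReal.ofReal (zeta2 (Fintype.card F) r j i)) := by
  have hfixed (A : Matrix l m F) :
      ((PMF.uniformOfFintype (Matrix m n F)).bind fun Φ =>
          D.map fun B => A * Φ * B).toOuterMeasure {X | X.rank = r} =
        ∑ j ∈ Finset.Icc r (Fintype.card n), D.toOuterMeasure {B | B.rank = j} *
          ENNReal.ofReal (zeta2 (Fintype.card F) r j A.rank) := by
    have hswap : ((PMF.uniformOfFintype (Matrix m n F)).bind fun Φ => D.map fun B => A * Φ * B) =
        D.bind fun B => (PMF.uniformOfFintype (Matrix m n F)).map fun Φ => A * Φ * B :=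
      PMF.bind_comm _ _ _
    rw [hswap, PMF.toOuterMeasure_bind_apply]
    simp only [PMF.toOuterMeasure_map_apply, Set.preimage_ofPred_eq,
      toOuterMeasure_uniformOfFintype_rank_mul_mul]
    refine tsum_mul_comp_eq_sum D Matrix.rank (fun j => ENNReal.ofReal (zeta2 _ r j A.rank))
      fun B hB => ?_
    have hrank : B.rank < r :=
      lt_of_not_ge fun h => hB (Finset.mem_Icc.2 ⟨h, B.rank_le_card_height⟩)
    rw [zeta2_eq_zero_of_lt_left _ hrank, ENNReal.ofReal_zero]
  rw [PMF.toOuterMeasure_bind_apply]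
  simp only [hfixed, ← Finset.mul_sum]
  refine tsum_mul_comp_eq_sum H Matrix.rank
    (fun i => ∑ j ∈ Finset.Icc r _, D.toOuterMeasure {B | B.rank = j} *
      ENNReal.ofReal (zeta2 _ r j i)) fun A hA => ?_
  have hrank : A.rank < r :=
    lt_of_not_ge fun h => hA (Finset.mem_Icc.2 ⟨h, A.rank_le_card_height⟩)
  refine Finset.sum_eq_zero fun j _ => ?_
  rw [zeta2_eq_zero_of_lt_right _ _ hrank, ENNReal.ofReal_zero, mul_zero]

/-- One-hop rank evolution of BATS codes (Theorem 1): if `H` is a random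
`M × s` matrix, `Φ` a totally random `s × t` matrix and `D` a random `{0,1}`
diagonal matrix with i.i.d. Bernoulli(1-ε) diagonal entries, all independent,
then `Pr{rank (H Φ D) = r} = Σ_{m=r}^{M} Σ_{n=r}^{t}
Pr{rank H = m} C(t,n)(1-ε)^n ε^{t-n} ζ_r^{n,m}`. -/
theorem rank_evolution_one_hop
    {F : Type*} [Field F] [Fintype F] [DecidableEq F]
    (M s t : ℕ) (hM : 1 ≤ M) (ht : 1 ≤ t) (ε : ℝ) (hε : ε ∈ Set.Icc (0 : ℝ) 1)
    (H : PMF (Matrix (Fin M) (Fin s) F))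
    (dp : PMF (Fin t → Bool))
    (hdp : ∀ f : Fin t → Bool,
      dp f = ∏ i : Fin t,
        (if f i then ENNReal.ofReal (1 - ε) else ENNReal.ofReal ε))
    (out : PMF (Matrix (Fin M) (Fin t) F))
    (hout : out =
      H.bind fun h =>
        (PMF.uniformOfFintype (Matrix (Fin s) (Fin t) F)).bind fun φ =>
          dp.map fun d =>
            h * φ * Matrix.diagonal (fun i => if d i then (1 : F) else 0))
    (r : ℕ) (hr : r ≤ M) :
    out.toOuterMeasure {X | X.rank = r} =
      ∑ m ∈ Finset.Icc r M, ∑ n ∈ Finset.Icc r t,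
        H.toOuterMeasure {h | h.rank = m} *
          ENNReal.ofReal
            ((t.choose n : ℝ) * (1 - ε) ^ n * ε ^ (t - n) *
              zeta2 (Fintype.card F) r n m) := by
  have hbinom (n : ℕ) : 0 ≤ (t.choose n : ℝ) * (1 - ε) ^ n * ε ^ (t - n) :=
    mul_nonneg (mul_nonneg (Nat.cast_nonneg _) (pow_nonneg (sub_nonneg.2 hε.2) _))
      (pow_nonneg hε.1 _)
  simpa only [hout, PMF.map_comp, Function.comp_def, Fintype.card_fin,
    toOuterMeasure_rank_diagonal hε dp hdp, ENNReal.ofReal_mul (hbinom _)] using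
    rank_evolution_one_hop_general H
      (dp.map fun d => Matrix.diagonal fun i => if d i then (1 : F) else 0) r
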